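/- Let c > 0, let ψ ∈ W^{2,∞}(𝕋), and let u be a classical solution of the temperature problem for (c,ψ). Then the Dirichlet energy of u is controlled by the speed: ∫_{Ω_ψ} |∇u(x,y)|² dx dy ≤ c. -/

import Mathlib

/-!
The operator norm of `fderiv ℝ u p` is taken for the sup norm on `ℝ × ℝ`, so it equals
`|u_x| + |u_y|`, whose square is at most `2 (u_x² + u_y²)`. It therefore suffices that
`∫ (u_x² + u_y²) ≤ c / 2`.

Multiplying the equation by `u` and integrating by parts formally gives
`∫ (u_x² + u_y²) = c ∫₀¹ (u - u² / 2)(ψ(y), y) dy`, and `u - u² / 2 ≤ 1 / 2` pointwise.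

As `u` is only `C¹` up to the boundary and the domain is unbounded, the integration by parts is
done with weights `η(x - ψ(y))`, where `η` is a `C¹` cutoff vanishing near `0` and near `-∞`. The
weighted field is then `C¹` on the whole plane, and the divergence theorem on a rectangle
(`cell_divergence`) gives `∫ η (u_x² + u_y²) = -∫ η' · flux` (`cutoff_identity`). In the layer near
the boundary, the Neumann condition and the continuity of the derivative up to the boundary bound
the flux by `c / 2 + ε` (`flux_le_near_boundary`), and `-η'` has unit mass there
(`boundary_weight`). In the layer far to the left, the flux is controlled by the tail of the finite
energy (`abs_flux_le`). Letting the cutoff tend to `1` and `ε` to `0` concludes.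
-/

open MeasureTheory Set Filter
open scoped NNReal

noncomputable section

/-- The open fresh region `Ω_ψ = {(x,y) : x < ψ(y)}`.  Functions on the torus `𝕋 = ℝ/ℤ`
are identified with 1-periodic functions on `ℝ`, so `Ω_ψ ⊆ ℝ × ℝ`. -/
def Omega (ψ : ℝ → ℝ) : Set (ℝ × ℝ) := {p | p.1 < ψ p.2}

/-- The closure of `Ω_ψ`, i.e. `{(x,y) : x ≤ ψ(y)}`. -/
def OmegaCl (ψ : ℝ → ℝ) : Set (ℝ × ℝ) := {p | p.1 ≤ ψ p.2}

/-- Partial derivative in the `x`-direction. -/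
def pdx (u : ℝ × ℝ → ℝ) (p : ℝ × ℝ) : ℝ := fderiv ℝ u p (1, 0)

/-- Partial derivative in the `y`-direction. -/
def pdy (u : ℝ × ℝ → ℝ) (p : ℝ × ℝ) : ℝ := fderiv ℝ u p (0, 1)

/-- Laplacian. -/
def lap (u : ℝ × ℝ → ℝ) (p : ℝ × ℝ) : ℝ := pdx (pdx u) p + pdy (pdy u) p

/-- `ψ ∈ W^{2,∞}(𝕋)`: a 1-periodic `C¹` function with Lipschitz derivative;
its a.e. second derivative is `deriv (deriv ψ)`. -/
structure W2infPer (ψ : ℝ → ℝ) : Prop where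
  periodic : Function.Periodic ψ 1
  contDiff : ContDiff ℝ 1 ψ
  lipDeriv : ∃ L : ℝ≥0, LipschitzWith L (deriv ψ)

/-- A classical solution `u` of the temperature problem for `(c, ψ)`:
1-periodic in `y`, continuous on the closure of `Ω_ψ`, `C²` inside, `C¹` up to the
boundary, with finite energy `∫_{Ω_ψ} (u² + |∇u|²) < ∞` (one period in `y`),
satisfying `c uₓ - Δu = 0` in `Ω_ψ`, the Neumann condition
`∂u/∂ν = c/√(1+ψ'²)` on `{x = ψ(y)}` (where `ν = (1, -ψ')/√(1+ψ'²)`),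
and `u → 0` uniformly in `y` as `x → -∞`. -/
structure IsTempSol (c : ℝ) (ψ : ℝ → ℝ) (u : ℝ × ℝ → ℝ) : Prop where
  periodic : ∀ x y : ℝ, u (x, y + 1) = u (x, y)
  contOn : ContinuousOn u (OmegaCl ψ)
  c2 : ContDiffOn ℝ 2 u (Omega ψ)
  c1 : ContDiffOn ℝ 1 u (OmegaCl ψ)
  pde : ∀ p ∈ Omega ψ, c * pdx u p - lap u p = 0
  bc : ∀ y : ℝ,
    fderivWithin ℝ u (OmegaCl ψ) (ψ y, y) (1, -deriv ψ y) / Real.sqrt (1 + deriv ψ y ^ 2)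
      = c / Real.sqrt (1 + deriv ψ y ^ 2)
  energy : IntegrableOn (fun p => u p ^ 2 + ‖fderiv ℝ u p‖ ^ 2)
      (Omega ψ ∩ {p : ℝ × ℝ | p.2 ∈ Ico (0 : ℝ) 1})
  decay : ∀ ε > 0, ∃ X : ℝ, ∀ p ∈ OmegaCl ψ, p.1 ≤ X → |u p| ≤ ε

/-! ### Integration over one period of `Ω_ψ` -/

/-- One period of `Ω_ψ`. -/
def Cell (ψ : ℝ → ℝ) : Set (ℝ × ℝ) := Omega ψ ∩ {p : ℝ × ℝ | p.2 ∈ Ico (0 : ℝ) 1}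

lemma isOpen_Omega {ψ : ℝ → ℝ} (h : Continuous ψ) : IsOpen (Omega ψ) :=
  isOpen_lt continuous_fst (h.comp continuous_snd)

lemma measurableSet_Cell {ψ : ℝ → ℝ} (h : Continuous ψ) : MeasurableSet (Cell ψ) :=
  (isOpen_Omega h).measurableSet.inter (measurable_snd measurableSet_Ico)

/-- Divergence theorem on one period: for a `C¹` field `(f, g)` on the plane, periodic in `y`,
whose divergence vanishes outside `Ω_ψ ∩ {|x| ≤ M}`, and with `f = 0` on `x = M` and `f = k` on
`x = -M`, the divergence has integral `-k`. -/
lemma cell_divergence {ψ : ℝ → ℝ} (hψ : Continuous ψ) {f g : ℝ × ℝ → ℝ}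
    (hf : ContDiff ℝ 1 f) (hg : ContDiff ℝ 1 g) {M k : ℝ} (hM : 0 < M)
    (hper : ∀ x, g (x, 1) = g (x, 0))
    (hr : ∀ y ∈ Icc (0 : ℝ) 1, f (M, y) = 0) (hl : ∀ y ∈ Icc (0 : ℝ) 1, f (-M, y) = k)
    (hzero : ∀ p : ℝ × ℝ, p.2 ∈ Icc (0 : ℝ) 1 → ¬ (p ∈ Omega ψ ∧ |p.1| ≤ M) →
      pdx f p + pdy g p = 0) :
    IntegrableOn (fun p => pdx f p + pdy g p) (Cell ψ) ∧
      ∫ p in Cell ψ, (pdx f p + pdy g p) = -k := by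
  set D : ℝ × ℝ → ℝ := fun p => pdx f p + pdy g p with hD
  have hcont : Continuous D :=
    ((hf.continuous_fderiv one_ne_zero).clm_apply continuous_const).add
      ((hg.continuous_fderiv one_ne_zero).clm_apply continuous_const)
  set B : Set (ℝ × ℝ) := Icc (-M, 0) (M, 1) with hB
  have hBint : IntegrableOn D B := hcont.continuousOn.integrableOn_compact isCompact_Icc
  have hBmem : ∀ p : ℝ × ℝ, p ∈ B ↔ |p.1| ≤ M ∧ p.2 ∈ Icc (0 : ℝ) 1 := by
    intro p
    simp only [hB, mem_Icc, Prod.le_def, abs_le]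
    tauto
  have hmC := measurableSet_Cell hψ
  have hmB : MeasurableSet B := measurableSet_Icc
  have hdiv : ∫ p in B, D p = -k := by
    have h := integral_divergence_prod_Icc_of_hasFDerivAt_of_le f g (fderiv ℝ f) (fderiv ℝ g)
      (-M, 0) (M, 1) ⟨by simpa using hM.le, by simp⟩ hf.continuous.continuousOn
      hg.continuous.continuousOn
      (fun x _ => (hf.differentiable one_ne_zero x).hasFDerivAt)
      (fun x _ => (hg.differentiable one_ne_zero x).hasFDerivAt) hBint
    have h1 : ∫ y in (0 : ℝ)..1, f (M, y) = ∫ y in (0 : ℝ)..1, (0 : ℝ) :=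
      intervalIntegral.integral_congr (fun y hy => hr y (by simpa using hy))
    have h2 : ∫ y in (0 : ℝ)..1, f (-M, y) = ∫ y in (0 : ℝ)..1, k :=
      intervalIntegral.integral_congr (fun y hy => hl y (by simpa using hy))
    simp only [hper, h1, h2] at h
    simpa [hD, pdx, pdy] using h
  have hae : (B ∩ {p : ℝ × ℝ | p.2 < 1} : Set (ℝ × ℝ)) =ᵐ[volume] B := by
    have hnull : (volume : Measure (ℝ × ℝ)) {p : ℝ × ℝ | p.2 = 1} = 0 := by
      have : {p : ℝ × ℝ | p.2 = 1} = univ ×ˢ {1} := by ext p; simp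
      rw [this, Measure.volume_eq_prod, Measure.prod_prod]
      simp
    refine inter_subset_left.eventuallyLE.antisymm ?_
    refine (ae_le_set).2 (measure_mono_null ?_ hnull)
    intro p hp
    have h1 := ((hBmem p).1 hp.1).2.2
    have h2 : ¬ p.2 < 1 := fun h => hp.2 ⟨hp.1, h⟩
    exact le_antisymm h1 (not_lt.1 h2)
  constructor
  · refine (hBint.mono_set inter_subset_right : IntegrableOn D (Cell ψ ∩ B))
      |>.of_forall_sdiff_eq_zero hmC ?_
    intro p hp
    refine hzero p ⟨hp.1.2.1, hp.1.2.2.le⟩ (fun h => hp.2 ⟨hp.1, (hBmem p).2 ⟨h.2, ?_⟩⟩)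
    exact ⟨hp.1.2.1, hp.1.2.2.le⟩
  · rw [setIntegral_eq_of_subset_of_forall_sdiff_eq_zero hmC
      (inter_subset_left : Cell ψ ∩ B ⊆ Cell ψ), ← hdiv, ← setIntegral_congr_set hae]
    · symm
      refine setIntegral_eq_of_subset_of_forall_sdiff_eq_zero
        (hmB.inter (measurableSet_lt measurable_snd measurable_const)) ?_ ?_
      · intro p hp
        exact ⟨hp.2, hp.1.2.2⟩
      · intro p hp
        have h := (hBmem p).1 hp.1.1
        exact hzero p h.2 (fun h' => hp.2 ⟨⟨h'.1, h.2.1, hp.1.2⟩, hp.1.1⟩)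
    · intro p hp
      refine hzero p ⟨hp.1.2.1, hp.1.2.2.le⟩ (fun h => hp.2 ⟨hp.1, (hBmem p).2 ⟨h.2, ?_⟩⟩)
      exact ⟨hp.1.2.1, hp.1.2.2.le⟩

/-! ### Calculus with cutoffs of the signed distance `x - ψ(y)` -/

lemma hasFDerivAt_cutoff {ψ η : ℝ → ℝ} (hψ : ContDiff ℝ 1 ψ) (hη : ContDiff ℝ 1 η) (p : ℝ × ℝ) :
    HasFDerivAt (fun p : ℝ × ℝ => η (p.1 - ψ p.2))
      (deriv η (p.1 - ψ p.2) • (ContinuousLinearMap.fst ℝ ℝ ℝ -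
        deriv ψ p.2 • ContinuousLinearMap.snd ℝ ℝ ℝ)) p := by
  have h1 : HasFDerivAt (fun p : ℝ × ℝ => ψ p.2)
      (deriv ψ p.2 • ContinuousLinearMap.snd ℝ ℝ ℝ) p :=
    (hψ.differentiable one_ne_zero p.2).hasDerivAt.comp_hasFDerivAt p hasFDerivAt_snd
  exact (hη.differentiable one_ne_zero _).hasDerivAt.comp_hasFDerivAt p (hasFDerivAt_fst.sub h1)

lemma contDiff_cutoff {ψ η : ℝ → ℝ} (hψ : ContDiff ℝ 1 ψ) (hη : ContDiff ℝ 1 η) :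
    ContDiff ℝ 1 (fun p : ℝ × ℝ => η (p.1 - ψ p.2)) :=
  hη.comp (contDiff_fst.sub (hψ.comp contDiff_snd))

lemma pdx_mul {f g : ℝ × ℝ → ℝ} {p : ℝ × ℝ} (hf : DifferentiableAt ℝ f p)
    (hg : DifferentiableAt ℝ g p) :
    pdx (fun p => f p * g p) p = pdx f p * g p + f p * pdx g p := by
  simp only [pdx, fderiv_fun_mul hf hg, add_apply,
    smul_apply, smul_eq_mul]
  ring

lemma pdy_mul {f g : ℝ × ℝ → ℝ} {p : ℝ × ℝ} (hf : DifferentiableAt ℝ f p)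
    (hg : DifferentiableAt ℝ g p) :
    pdy (fun p => f p * g p) p = pdy f p * g p + f p * pdy g p := by
  simp only [pdy, fderiv_fun_mul hf hg, add_apply,
    smul_apply, smul_eq_mul]
  ring

lemma pdx_eq_zero {f : ℝ × ℝ → ℝ} {p : ℝ × ℝ} (h : f =ᶠ[nhds p] fun _ => 0) : pdx f p = 0 := by
  simp [pdx, h.fderiv_eq]

lemma pdy_eq_zero {f : ℝ × ℝ → ℝ} {p : ℝ × ℝ} (h : f =ᶠ[nhds p] fun _ => 0) : pdy f p = 0 := by
  simp [pdy, h.fderiv_eq]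

lemma pdx_cutoff {ψ η : ℝ → ℝ} (hψ : ContDiff ℝ 1 ψ) (hη : ContDiff ℝ 1 η) (p : ℝ × ℝ) :
    pdx (fun p : ℝ × ℝ => η (p.1 - ψ p.2)) p = deriv η (p.1 - ψ p.2) := by
  simp [pdx, (hasFDerivAt_cutoff hψ hη p).fderiv]

lemma pdy_cutoff {ψ η : ℝ → ℝ} (hψ : ContDiff ℝ 1 ψ) (hη : ContDiff ℝ 1 η) (p : ℝ × ℝ) :
    pdy (fun p : ℝ × ℝ => η (p.1 - ψ p.2)) p = -(deriv η (p.1 - ψ p.2) * deriv ψ p.2) := by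
  simp [pdy, (hasFDerivAt_cutoff hψ hη p).fderiv]

/-- A cutoff vanishing near and beyond the boundary makes the values off `Ω_ψ` harmless. -/
lemma cutoff_mul_eventually_zero {ψ η : ℝ → ℝ} (hψ : ContDiff ℝ 1 ψ) {δ : ℝ} (hδ : 0 < δ)
    (h0 : ∀ s, -δ ≤ s → η s = 0) (F : ℝ × ℝ → ℝ) {p : ℝ × ℝ} (hp : p ∉ Omega ψ) :
    (fun p : ℝ × ℝ => η (p.1 - ψ p.2) * F p) =ᶠ[nhds p] fun _ => 0 := by
  have ho : IsOpen {p : ℝ × ℝ | -δ < p.1 - ψ p.2} :=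
    isOpen_lt continuous_const (continuous_fst.sub (hψ.continuous.comp continuous_snd))
  have hp' : ¬ p.1 < ψ p.2 := hp
  filter_upwards [ho.mem_nhds (show -δ < p.1 - ψ p.2 by linarith)] with q hq
  rw [h0 _ (le_of_lt hq), zero_mul]

lemma contDiff_cutoff_mul {ψ η : ℝ → ℝ} (hψ : ContDiff ℝ 1 ψ) (hη : ContDiff ℝ 1 η)
    {δ : ℝ} (hδ : 0 < δ) (h0 : ∀ s, -δ ≤ s → η s = 0) {F : ℝ × ℝ → ℝ}
    (hF : ContDiffOn ℝ 1 F (Omega ψ)) :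
    ContDiff ℝ 1 (fun p : ℝ × ℝ => η (p.1 - ψ p.2) * F p) := by
  rw [contDiff_iff_contDiffAt]
  intro p
  by_cases hp : p ∈ Omega ψ
  · exact (contDiff_cutoff hψ hη).contDiffAt.mul
      (hF.contDiffAt ((isOpen_Omega hψ.continuous).mem_nhds hp))
  · exact contDiffAt_const.congr_of_eventuallyEq (cutoff_mul_eventually_zero hψ hδ h0 F hp)

/-! ### The energy identity -/

/-- The flux `u (u_x - ψ' u_y) - c u² / 2` through the translates of the curve `x = ψ(y)`. -/
def flux (c : ℝ) (ψ : ℝ → ℝ) (u : ℝ × ℝ → ℝ) (p : ℝ × ℝ) : ℝ :=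
  u p * (pdx u p - deriv ψ p.2 * pdy u p) - c / 2 * u p ^ 2

lemma pdy_periodic {c : ℝ} {ψ : ℝ → ℝ} {u : ℝ × ℝ → ℝ} (hu : IsTempSol c ψ u) (x : ℝ) :
    pdy u (x, 1) = pdy u (x, 0) := by
  have h : (fun p : ℝ × ℝ => u (p + (0, 1))) = u := by
    funext p
    have := hu.periodic p.1 p.2
    simpa [Prod.add_def] using this
  have h2 := fderiv_comp_add_right (𝕜 := ℝ) (f := u) (x := (x, 0)) ((0, 1) : ℝ × ℝ)
  rw [h] at h2
  simp [pdy, h2]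

/-- Testing the equation with `η(x - ψ(y)) u` and integrating by parts; the drift term is absorbed
into the flux through `u u_x = (u² / 2)_x`. -/
lemma cutoff_identity {c : ℝ} {ψ : ℝ → ℝ} {u : ℝ × ℝ → ℝ}
    (hψ : W2infPer ψ) (hu : IsTempSol c ψ u) {η : ℝ → ℝ} (hη : ContDiff ℝ 1 η)
    {δ R : ℝ} (hδ : 0 < δ) (h0 : ∀ s, -δ ≤ s → η s = 0) (hR : ∀ s, s ≤ -R → η s = 0) :
    IntegrableOn (fun p => η (p.1 - ψ p.2) * (pdx u p ^ 2 + pdy u p ^ 2)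
        + deriv η (p.1 - ψ p.2) * flux c ψ u p) (Cell ψ) ∧
      ∫ p in Cell ψ, (η (p.1 - ψ p.2) * (pdx u p ^ 2 + pdy u p ^ 2)
        + deriv η (p.1 - ψ p.2) * flux c ψ u p) = 0 := by
  have hψ1 := hψ.contDiff
  have hO := isOpen_Omega hψ1.continuous
  have hu1 : ContDiffOn ℝ 1 u (Omega ψ) := hu.c2.of_le (by norm_num)
  have hdu : ContDiffOn ℝ 1 (fderiv ℝ u) (Omega ψ) :=
    hu.c2.fderiv_of_isOpen hO (by norm_num)
  have hux : ContDiffOn ℝ 1 (pdx u) (Omega ψ) := hdu.clm_apply contDiffOn_const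
  have huy : ContDiffOn ℝ 1 (pdy u) (Omega ψ) := hdu.clm_apply contDiffOn_const
  have hF : ContDiffOn ℝ 1 (fun p => u p * (pdx u p + (-(c / 2)) * u p)) (Omega ψ) :=
    hu1.mul (hux.add (contDiffOn_const.mul hu1))
  have hG : ContDiffOn ℝ 1 (fun p => u p * pdy u p) (Omega ψ) := hu1.mul huy
  have hf := contDiff_cutoff_mul hψ1 hη hδ h0 hF
  have hg := contDiff_cutoff_mul hψ1 hη hδ h0 hG
  obtain ⟨P, hP⟩ := isCompact_Icc.exists_bound_of_continuousOn
    (s := Icc (0 : ℝ) 1) hψ1.continuous.continuousOn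
  have hP0 : 0 ≤ P := (norm_nonneg _).trans (hP 0 (by simp))
  simp only [Real.norm_eq_abs, abs_le] at hP
  set M := P + |R| + 1 with hM
  have hMp : 0 < M := by positivity
  have hRabs := le_abs_self R
  have hRnn := abs_nonneg R
  have hnear : ∀ p : ℝ × ℝ, p ∈ Omega ψ →
      pdx (fun p : ℝ × ℝ => η (p.1 - ψ p.2) * (u p * (pdx u p + (-(c / 2)) * u p))) p
        + pdy (fun p : ℝ × ℝ => η (p.1 - ψ p.2) * (u p * pdy u p)) p
      = η (p.1 - ψ p.2) * (pdx u p ^ 2 + pdy u p ^ 2)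
        + deriv η (p.1 - ψ p.2) * flux c ψ u p := by
    intro p hp
    have hd {F : ℝ × ℝ → ℝ} (h : ContDiffOn ℝ 1 F (Omega ψ)) : DifferentiableAt ℝ F p :=
      (h.contDiffAt (hO.mem_nhds hp)).differentiableAt one_ne_zero
    have hc : DifferentiableAt ℝ (fun p : ℝ × ℝ => η (p.1 - ψ p.2)) p :=
      (hasFDerivAt_cutoff hψ1 hη p).differentiableAt
    have hcu : DifferentiableAt ℝ (fun p => (-(c / 2)) * u p) p := (hd hu1).const_mul _
    have hadd : pdx (fun p => pdx u p + (-(c / 2)) * u p) p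
        = pdx (pdx u) p + (-(c / 2)) * pdx u p := by
      unfold pdx at *
      rw [fderiv_fun_add (hd hux) hcu, fderiv_const_mul (hd hu1)]
      simp
    rw [pdx_mul hc (hd hF), pdx_mul (hd hu1) (hd (hux.add (contDiffOn_const.mul hu1))), hadd,
      pdy_mul hc (hd hG), pdy_mul (hd hu1) (hd huy), pdx_cutoff hψ1 hη, pdy_cutoff hψ1 hη]
    have hpde := hu.pde p hp
    unfold lap at hpde
    unfold flux
    linear_combination (-(η (p.1 - ψ p.2) * u p)) * hpde
  have hkey := cell_divergence (M := M) (k := 0) hψ1.continuous hf hg hMp ?_ ?_ ?_ ?_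
  · constructor
    · exact hkey.1.congr_fun (fun p hp => hnear p hp.1) (measurableSet_Cell hψ1.continuous)
    · rw [← setIntegral_congr_fun (measurableSet_Cell hψ1.continuous)
        (fun p hp => hnear p hp.1), hkey.2, neg_zero]
  · intro x
    have h1 : ψ 1 = ψ 0 := by simpa using hψ.periodic 0
    have h2 : u (x, 1) = u (x, 0) := by simpa using hu.periodic x 0
    simp only [h1, h2, pdy_periodic hu]
  · intro y hy
    have := hP y hy
    simp only
    rw [h0 _ (by linarith), zero_mul]
  · intro y hy
    have := hP y hy
    simp only
    rw [hR _ (by linarith), zero_mul]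
  · intro p hy hp
    by_cases hpO : p ∈ Omega ψ
    · have hb := hP _ hy
      have hx : M < |p.1| := not_le.1 fun h => hp ⟨hpO, h⟩
      have hlt : p.1 < ψ p.2 := hpO
      have hs : p.1 - ψ p.2 < -R := by
        rcases lt_abs.1 hx with h | h <;> linarith
      have hd : deriv η (p.1 - ψ p.2) = 0 := by
        have : η =ᶠ[nhds (p.1 - ψ p.2)] fun _ => 0 := by
          filter_upwards [Iio_mem_nhds hs] with t ht using hR t (le_of_lt ht)
        rw [this.deriv_eq, deriv_const]
      rw [hnear p hpO, hd, hR _ hs.le]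
      ring
    · have h1 := pdx_eq_zero (cutoff_mul_eventually_zero hψ1 hδ h0
        (fun p => u p * (pdx u p + (-(c / 2)) * u p)) hpO)
      have h2 := pdy_eq_zero (cutoff_mul_eventually_zero hψ1 hδ h0
        (fun p => u p * pdy u p) hpO)
      exact (congrArg₂ (· + ·) h1 h2).trans (add_zero 0)

/-! ### The flux near the boundary -/

/-- `OmegaCl ψ` is the image of a half-plane under the shear `(s, y) ↦ (s + ψ(y), y)`. -/
lemma uniqueDiffOn_OmegaCl {ψ : ℝ → ℝ} (hψ : ContDiff ℝ 1 ψ) : UniqueDiffOn ℝ (OmegaCl ψ) := by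
  have hs : UniqueDiffOn ℝ (Iic (0 : ℝ) ×ˢ (univ : Set ℝ)) :=
    (uniqueDiffOn_Iic 0).prod uniqueDiffOn_univ
  have himg : (fun q : ℝ × ℝ => (q.1 + ψ q.2, q.2)) '' (Iic (0 : ℝ) ×ˢ (univ : Set ℝ))
      = OmegaCl ψ := by
    ext p
    simp only [mem_image, mem_prod, mem_Iic, mem_univ, and_true, OmegaCl, mem_ofPred_eq]
    constructor
    · rintro ⟨q, hq, rfl⟩
      simpa using hq
    · intro hp
      exact ⟨(p.1 - ψ p.2, p.2), by simpa using hp, by simp⟩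
  rw [← himg]
  refine hs.image (f' := fun q => (ContinuousLinearMap.fst ℝ ℝ ℝ +
    deriv ψ q.2 • ContinuousLinearMap.snd ℝ ℝ ℝ).prod (ContinuousLinearMap.snd ℝ ℝ ℝ)) ?_ ?_
  · intro q _
    have h1 : HasFDerivAt (fun p : ℝ × ℝ => ψ p.2)
        (deriv ψ q.2 • ContinuousLinearMap.snd ℝ ℝ ℝ) q :=
      (hψ.differentiable one_ne_zero q.2).hasDerivAt.comp_hasFDerivAt q hasFDerivAt_snd
    exact ((hasFDerivAt_fst.add h1).prodMk hasFDerivAt_snd).hasFDerivWithinAt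
  · intro q _
    refine Function.Surjective.denseRange fun v => ⟨(v.1 - deriv ψ q.2 * v.2, v.2), ?_⟩
    ext <;> simp

/-- Since `c (u - u² / 2) ≤ c / 2` on the boundary, the flux is almost bounded by `c / 2`
near the boundary. -/
lemma flux_le_near_boundary {c : ℝ} {ψ : ℝ → ℝ} {u : ℝ × ℝ → ℝ} (hc : 0 < c)
    (hψ : W2infPer ψ) (hu : IsTempSol c ψ u) {ε : ℝ} (hε : 0 < ε) :
    ∃ d > 0, ∀ p ∈ Cell ψ, -d < p.1 - ψ p.2 → flux c ψ u p ≤ c / 2 + ε := by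
  have hψ1 := hψ.contDiff
  have hO := isOpen_Omega hψ1.continuous
  set L : ℝ × ℝ → ℝ := fun p =>
    u p * fderivWithin ℝ u (OmegaCl ψ) p (1, -deriv ψ p.2) - c / 2 * u p ^ 2 with hL
  have hdψ : Continuous (deriv ψ) := hψ1.continuous_deriv_one
  have hLc : ContinuousOn L (OmegaCl ψ) := by
    have h1 : ContinuousOn (fun p => fderivWithin ℝ u (OmegaCl ψ) p (1, -deriv ψ p.2))
        (OmegaCl ψ) :=
      (hu.c1.continuousOn_fderivWithin (uniqueDiffOn_OmegaCl hψ1) le_rfl).clm_apply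
        (continuous_const.prodMk (hdψ.comp continuous_snd).neg).continuousOn
    exact (hu.contOn.mul h1).sub (continuousOn_const.mul (hu.contOn.pow 2))
  set H : ℝ × ℝ → ℝ := fun q => L (q.1 + ψ q.2, q.2) with hH
  have hHc : ContinuousOn H (Icc (-1 : ℝ) 0 ×ˢ Icc (0 : ℝ) 1) := by
    refine hLc.comp ((continuous_fst.add (hψ1.continuous.comp continuous_snd)).prodMk
      continuous_snd).continuousOn ?_
    intro q hq
    have : q.1 ≤ 0 := hq.1.2
    simpa [OmegaCl] using this
  have hHu := (isCompact_Icc.prod isCompact_Icc).uniformContinuousOn_of_continuous hHc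
  obtain ⟨d, hd, hdH⟩ := Metric.uniformContinuousOn_iff.1 hHu ε hε
  refine ⟨min d 1, lt_min hd one_pos, ?_⟩
  intro p hp hs
  have hlt : p.1 < ψ p.2 := hp.1
  have hd1 := min_le_left d 1
  have hd2 := min_le_right d 1
  have hy : p.2 ∈ Icc (0 : ℝ) 1 := ⟨hp.2.1, hp.2.2.le⟩
  have hdist := hdH (p.1 - ψ p.2, p.2) ⟨⟨by simp only; linarith, by simp only; linarith⟩, hy⟩
    (0, p.2) ⟨by simp, hy⟩ (by
      rw [Prod.dist_eq, dist_self, Real.dist_eq, max_lt_iff]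
      refine ⟨?_, hd⟩
      simp only [sub_zero]
      rw [abs_lt]
      constructor <;> linarith)
  have hHp : H (p.1 - ψ p.2, p.2) = flux c ψ u p := by
    have hnhds : OmegaCl ψ ∈ nhds p :=
      mem_of_superset (hO.mem_nhds hp.1) fun q (hq : q.1 < ψ q.2) => le_of_lt hq
    have hv : ((1, -deriv ψ p.2) : ℝ × ℝ) = (1, 0) - deriv ψ p.2 • (0, 1) := by
      ext <;> simp
    simp only [hH, hL, sub_add_cancel, Prod.mk.eta, fderivWithin_of_mem_nhds hnhds, flux, pdx, pdy]
    rw [hv, map_sub, map_smul, smul_eq_mul]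
  have hH0 : H (0, p.2) ≤ c / 2 := by
    have hbc := hu.bc p.2
    have hsq : Real.sqrt (1 + deriv ψ p.2 ^ 2) ≠ 0 := by positivity
    have hbc' := (div_left_inj' hsq).1 hbc
    simp only [hH, hL, zero_add, hbc']
    nlinarith [mul_nonneg hc.le (sq_nonneg (u (ψ p.2, p.2) - 1))]
  rw [hHp, Real.dist_eq] at hdist
  have := (abs_lt.1 hdist).2
  linarith

/-! ### Pointwise bounds -/

/-- `ℝ × ℝ` carries the sup norm, so its dual carries the `ℓ¹` norm. -/
lemma norm_fderiv_sq_le (u : ℝ × ℝ → ℝ) (p : ℝ × ℝ) :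
    ‖fderiv ℝ u p‖ ^ 2 ≤ 2 * (pdx u p ^ 2 + pdy u p ^ 2) := by
  have h : ‖fderiv ℝ u p‖ ≤ |pdx u p| + |pdy u p| := by
    refine ContinuousLinearMap.opNorm_le_bound _ (by positivity) fun v => ?_
    have hv : v = v.1 • ((1, 0) : ℝ × ℝ) + v.2 • ((0, 1) : ℝ × ℝ) := by ext <;> simp
    have h1 : fderiv ℝ u p v = v.1 * pdx u p + v.2 * pdy u p := by
      conv_lhs => rw [hv]
      rw [map_add, map_smul, map_smul]
      rfl
    rw [h1, Real.norm_eq_abs]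
    calc |v.1 * pdx u p + v.2 * pdy u p| ≤ |v.1| * |pdx u p| + |v.2| * |pdy u p| := by
          rw [← abs_mul, ← abs_mul]
          exact abs_add_le _ _
      _ ≤ ‖v‖ * |pdx u p| + ‖v‖ * |pdy u p| := by
          gcongr
          · exact norm_fst_le v
          · exact norm_snd_le v
      _ = (|pdx u p| + |pdy u p|) * ‖v‖ := by ring
  have h2 : ‖fderiv ℝ u p‖ ^ 2 ≤ (|pdx u p| + |pdy u p|) ^ 2 := by gcongr
  nlinarith [sq_nonneg (|pdx u p| - |pdy u p|), sq_abs (pdx u p), sq_abs (pdy u p)]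

lemma abs_flux_le {c C : ℝ} {ψ : ℝ → ℝ} (u : ℝ × ℝ → ℝ) {p : ℝ × ℝ} (hc : 0 < c)
    (hC : |deriv ψ p.2| ≤ C) :
    |flux c ψ u p| ≤ (1 + C + c) * (u p ^ 2 + ‖fderiv ℝ u p‖ ^ 2) := by
  set N := ‖fderiv ℝ u p‖
  have hN : 0 ≤ N := norm_nonneg _
  have hC0 : 0 ≤ C := (abs_nonneg _).trans hC
  have hx : |pdx u p| ≤ N := by
    simpa [Prod.norm_def, N, pdx, pdy] using (fderiv ℝ u p).le_opNorm (1, 0)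
  have hy : |pdy u p| ≤ N := by
    simpa [Prod.norm_def, N, pdx, pdy] using (fderiv ℝ u p).le_opNorm (0, 1)
  have h1 : |pdx u p - deriv ψ p.2 * pdy u p| ≤ (1 + C) * N := by
    calc |pdx u p - deriv ψ p.2 * pdy u p| ≤ |pdx u p| + |deriv ψ p.2| * |pdy u p| := by
          rw [← abs_mul]
          exact abs_sub _ _
      _ ≤ N + C * N := by gcongr
      _ = (1 + C) * N := by ring
  have h2 : |flux c ψ u p| ≤ |u p| * ((1 + C) * N) + c / 2 * u p ^ 2 := by
    unfold flux
    calc _ ≤ |u p * (pdx u p - deriv ψ p.2 * pdy u p)| + |c / 2 * u p ^ 2| := abs_sub _ _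
      _ = |u p| * |pdx u p - deriv ψ p.2 * pdy u p| + c / 2 * u p ^ 2 := by
          rw [abs_mul, abs_of_nonneg (show 0 ≤ c / 2 * u p ^ 2 by positivity)]
      _ ≤ _ := by gcongr
  have h3 : |u p| * N ≤ u p ^ 2 + N ^ 2 := by
    nlinarith [sq_nonneg (|u p| - N), sq_abs (u p), sq_nonneg N, sq_nonneg (u p)]
  have h4 : |u p| * ((1 + C) * N) ≤ (1 + C) * (u p ^ 2 + N ^ 2) := by
    calc |u p| * ((1 + C) * N) = (1 + C) * (|u p| * N) := by ring
      _ ≤ _ := by gcongr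
  nlinarith [mul_nonneg hc.le (sq_nonneg (u p)), mul_nonneg hc.le (sq_nonneg N)]

lemma deriv_smoothTransition_nonneg (x : ℝ) : 0 ≤ deriv Real.smoothTransition x :=
  Real.smoothTransition.monotone.deriv_nonneg

lemma deriv_smoothTransition_of_nonpos {x : ℝ} (hx : x ≤ 0) :
    deriv Real.smoothTransition x = 0 := by
  refine IsLocalMin.deriv_eq_zero (Eventually.of_forall fun y => ?_)
  rw [Real.smoothTransition.zero_of_nonpos hx]
  exact Real.smoothTransition.nonneg y

lemma deriv_smoothTransition_of_one_le {x : ℝ} (hx : 1 ≤ x) :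
    deriv Real.smoothTransition x = 0 := by
  refine IsLocalMax.deriv_eq_zero (Eventually.of_forall fun y => ?_)
  rw [Real.smoothTransition.one_of_one_le hx]
  exact Real.smoothTransition.le_one y

lemma exists_deriv_smoothTransition_le : ∃ K : ℝ, 0 ≤ K ∧ ∀ x, deriv Real.smoothTransition x ≤ K := by
  have h : Continuous (deriv Real.smoothTransition) :=
    (Real.smoothTransition.contDiff (n := 1)).continuous_deriv_one
  obtain ⟨K, hK⟩ := isCompact_Icc.exists_bound_of_continuousOn (s := Icc (0 : ℝ) 1) h.continuousOn
  have hK0 : 0 ≤ K := (norm_nonneg _).trans (hK 0 (by simp))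
  refine ⟨K, hK0, fun x => ?_⟩
  rcases le_total x 0 with h0 | h0
  · rwa [deriv_smoothTransition_of_nonpos h0]
  rcases le_total 1 x with h1 | h1
  · rwa [deriv_smoothTransition_of_one_le h1]
  · exact (le_abs_self _).trans (hK x ⟨h0, h1⟩)

/-! ### The truncated estimate and the limit -/

/-- The weight `T'(-s/δ - 1)/δ`, with `s = x - ψ(y)` and `T` the smooth transition function, has
unit mass on a period and lives on `-2δ ≤ s ≤ -δ`. -/
lemma boundary_weight {ψ : ℝ → ℝ} (hψ : ContDiff ℝ 1 ψ) {δ : ℝ} (hδ : 0 < δ) :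
    IntegrableOn (fun p : ℝ × ℝ => deriv Real.smoothTransition (-(p.1 - ψ p.2) / δ - 1) / δ)
      (Cell ψ) ∧
    ∫ p in Cell ψ, deriv Real.smoothTransition (-(p.1 - ψ p.2) / δ - 1) / δ = 1 := by
  set b : ℝ → ℝ := fun s => -Real.smoothTransition (-s / δ - 1) with hb
  have hbC : ContDiff ℝ 1 b :=
    ((Real.smoothTransition.contDiff (n := 1)).comp
      ((contDiff_id.neg.div_const δ).sub contDiff_const)).neg
  have hbd : ∀ s, deriv b s = deriv Real.smoothTransition (-s / δ - 1) / δ := by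
    intro s
    have h1 : HasDerivAt (fun s : ℝ => -s / δ - 1) (-1 / δ) s :=
      (((hasDerivAt_id s).neg).div_const δ).sub_const 1
    have h2 : HasDerivAt Real.smoothTransition (deriv Real.smoothTransition (-s / δ - 1))
        (-s / δ - 1) :=
      ((Real.smoothTransition.contDiff (n := 1)).differentiable one_ne_zero _).hasDerivAt
    have h3 := (h2.comp s h1).neg
    have h4 : HasDerivAt b _ s := h3
    rw [h4.deriv]
    ring
  obtain ⟨P, hP⟩ := isCompact_Icc.exists_bound_of_continuousOn
    (s := Icc (0 : ℝ) 1) hψ.continuous.continuousOn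
  have hP0 : 0 ≤ P := (norm_nonneg _).trans (hP 0 (by simp))
  simp only [Real.norm_eq_abs, abs_le] at hP
  have hone : ∀ s, s ≤ -(2 * δ) → 1 ≤ -s / δ - 1 := by
    intro s hs
    have : 2 ≤ -s / δ := (le_div_iff₀ hδ).2 (by linarith)
    linarith
  have hneg : ∀ s, -δ ≤ s → -s / δ - 1 ≤ 0 := by
    intro s hs
    have : -s / δ ≤ 1 := (div_le_iff₀ hδ).2 (by linarith)
    linarith
  have hdx : ∀ p : ℝ × ℝ, pdx (fun p : ℝ × ℝ => b (p.1 - ψ p.2)) p + pdy (fun _ => (0 : ℝ)) p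
      = deriv Real.smoothTransition (-(p.1 - ψ p.2) / δ - 1) / δ := by
    intro p
    rw [pdx_cutoff hψ hbC, hbd]
    simp [pdy]
  have hkey := cell_divergence (ψ := ψ) (M := P + 2 * δ) (k := -1) hψ.continuous
    (contDiff_cutoff hψ hbC) (g := fun _ => 0) contDiff_const (by positivity) (fun _ => rfl)
    ?_ ?_ ?_
  · simpa only [hdx, neg_neg] using hkey
  · intro y hy
    have := hP y hy
    simp only [hb]
    rw [Real.smoothTransition.zero_of_nonpos (hneg _ (by linarith)), neg_zero]
  · intro y hy
    have := hP y hy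
    simp only [hb]
    rw [Real.smoothTransition.one_of_one_le (hone _ (by linarith))]
  · intro p hy hp
    have hb := hP _ hy
    rw [hdx]
    by_cases hpO : p ∈ Omega ψ
    · have hx : P + 2 * δ < |p.1| := not_le.1 fun h => hp ⟨hpO, h⟩
      have hlt : p.1 < ψ p.2 := hpO
      have hs : p.1 - ψ p.2 ≤ -(2 * δ) := by
        rcases lt_abs.1 hx with h | h <;> linarith
      rw [deriv_smoothTransition_of_one_le (hone _ hs), zero_div]
    · have hlt : ¬ p.1 < ψ p.2 := hpO
      rw [deriv_smoothTransition_of_nonpos (hneg _ (by linarith)), zero_div]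

lemma measurable_signedDist {ψ : ℝ → ℝ} (hψ : Continuous ψ) :
    Measurable fun p : ℝ × ℝ => p.1 - ψ p.2 :=
  (continuous_fst.sub (hψ.comp continuous_snd)).measurable

lemma integrableOn_norm_sq {c : ℝ} {ψ : ℝ → ℝ} {u : ℝ × ℝ → ℝ} (hu : IsTempSol c ψ u) :
    IntegrableOn (fun p => ‖fderiv ℝ u p‖ ^ 2) (Cell ψ) := by
  refine Integrable.mono' hu.energy ((measurable_fderiv ℝ u).norm.pow_const 2).aestronglyMeasurable
    (Eventually.of_forall fun p => ?_)
  rw [Real.norm_of_nonneg (by positivity)]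
  nlinarith [sq_nonneg (u p)]

/-- The cutoff `η(s) = T(s + R + 1) + T(-s/δ - 1) - 1`, with `T` the smooth transition function,
rises from `0` to `1` on `[-R - 1, -R]` and falls back to `0` on `[-2δ, -δ]`. The
fall contributes the flux near the boundary, the rise a multiple of the energy in `s < -R`. -/
lemma truncated_bound {c ε d K C δ R : ℝ} {ψ : ℝ → ℝ} {u : ℝ × ℝ → ℝ}
    (hc : 0 < c) (hψ : W2infPer ψ) (hu : IsTempSol c ψ u)
    (hflux : ∀ p ∈ Cell ψ, -d < p.1 - ψ p.2 → flux c ψ u p ≤ c / 2 + ε)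
    (hK : 0 ≤ K) (hT : ∀ x, deriv Real.smoothTransition x ≤ K)
    (hC : ∀ y ∈ Icc (0 : ℝ) 1, |deriv ψ y| ≤ C) (hδ : 0 < δ) (hδd : 2 * δ < d) (hR : 2 * δ ≤ R) :
    ∫ p in Cell ψ ∩ {p | -R ≤ p.1 - ψ p.2 ∧ p.1 - ψ p.2 ≤ -(2 * δ)}, ‖fderiv ℝ u p‖ ^ 2
      ≤ c + 2 * ε + 2 * (K * (1 + C + c)) *
        ∫ p in Cell ψ ∩ {p | p.1 - ψ p.2 < -R}, (u p ^ 2 + ‖fderiv ℝ u p‖ ^ 2) := by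
  have hψ1 := hψ.contDiff
  have hmC := measurableSet_Cell hψ1.continuous
  have hms := measurable_signedDist hψ1.continuous
  set T := Real.smoothTransition with hTdef
  set η : ℝ → ℝ := fun s => T (s + R + 1) + T (-s / δ - 1) - 1 with hη
  have hTC : ContDiff ℝ 1 T := Real.smoothTransition.contDiff (n := 1)
  have hηC : ContDiff ℝ 1 η :=
    ((hTC.comp ((contDiff_id.add contDiff_const).add contDiff_const)).add
      (hTC.comp ((contDiff_id.neg.div_const δ).sub contDiff_const))).sub contDiff_const
  have hηd : ∀ s, deriv η s = deriv T (s + R + 1) - deriv T (-s / δ - 1) / δ := by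
    intro s
    have h1 : HasDerivAt (fun s : ℝ => -s / δ - 1) (-1 / δ) s :=
      (((hasDerivAt_id s).neg).div_const δ).sub_const 1
    have h1' : HasDerivAt (fun s : ℝ => s + R + 1) 1 s :=
      ((hasDerivAt_id s).add_const R).add_const 1
    have h2 : ∀ x, HasDerivAt T (deriv T x) x := fun x =>
      (hTC.differentiable one_ne_zero x).hasDerivAt
    have h3 := (((h2 _).comp s h1').add ((h2 _).comp s h1)).sub_const 1
    have h4 : HasDerivAt η _ s := h3
    rw [h4.deriv]
    ring
  have hone : ∀ s, s ≤ -(2 * δ) → 1 ≤ -s / δ - 1 := by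
    intro s hs
    have : 2 ≤ -s / δ := (le_div_iff₀ hδ).2 (by linarith)
    linarith
  have hneg : ∀ s, -δ ≤ s → -s / δ - 1 ≤ 0 := by
    intro s hs
    have : -s / δ ≤ 1 := (div_le_iff₀ hδ).2 (by linarith)
    linarith
  obtain ⟨hint, hzero⟩ := cutoff_identity (R := R + 1) hψ hu hηC hδ
    (fun s hs => by
      simp only [hη, hTdef]
      rw [Real.smoothTransition.one_of_one_le (by linarith),
        Real.smoothTransition.zero_of_nonpos (hneg s hs)]
      ring)
    (fun s hs => by
      simp only [hη, hTdef]
      rw [Real.smoothTransition.zero_of_nonpos (by linarith),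
        Real.smoothTransition.one_of_one_le (hone s (by linarith))]
      ring)
  obtain ⟨hwint, hw⟩ := boundary_weight hψ1 hδ
  set S : Set (ℝ × ℝ) := {p | -R ≤ p.1 - ψ p.2 ∧ p.1 - ψ p.2 ≤ -(2 * δ)} with hS
  set A : Set (ℝ × ℝ) := {p | p.1 - ψ p.2 < -R} with hA
  have hmS : MeasurableSet S := hms measurableSet_Icc
  have hmA : MeasurableSet A := hms measurableSet_Iio
  have hN := integrableOn_norm_sq hu
  have he : IntegrableOn (fun p => u p ^ 2 + ‖fderiv ℝ u p‖ ^ 2) (Cell ψ) := hu.energy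
  have hptw : ∀ p ∈ Cell ψ, S.indicator (fun p => ‖fderiv ℝ u p‖ ^ 2) p ≤
      (2 * (η (p.1 - ψ p.2) * (pdx u p ^ 2 + pdy u p ^ 2)
        + deriv η (p.1 - ψ p.2) * flux c ψ u p)
      + (c + 2 * ε) * (deriv T (-(p.1 - ψ p.2) / δ - 1) / δ))
      + 2 * (K * (1 + C + c)) * A.indicator (fun p => u p ^ 2 + ‖fderiv ℝ u p‖ ^ 2) p := by
    intro p hp
    have hlt : p.1 < ψ p.2 := hp.1
    have hNle := norm_fderiv_sq_le u p
    have hGle := abs_flux_le u hc (hC p.2 ⟨hp.2.1, hp.2.2.le⟩)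
    set s := p.1 - ψ p.2 with hs
    set E := pdx u p ^ 2 + pdy u p ^ 2 with hE
    set G := flux c ψ u p with hG
    set w := deriv T (-s / δ - 1) / δ with hwdef
    set e := u p ^ 2 + ‖fderiv ℝ u p‖ ^ 2 with hedef
    have hE0 : 0 ≤ E := by positivity
    have hw0 : 0 ≤ w := div_nonneg (deriv_smoothTransition_nonneg _) hδ.le
    have hη0 : 0 ≤ η s := by
      simp only [hη]
      rcases le_or_gt (-R) s with h | h
      · rw [hTdef, Real.smoothTransition.one_of_one_le (by linarith : (1 : ℝ) ≤ s + R + 1)]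
        linarith [Real.smoothTransition.nonneg (-s / δ - 1)]
      · rw [hTdef, Real.smoothTransition.one_of_one_le (hone s (by linarith))]
        linarith [Real.smoothTransition.nonneg (s + R + 1)]
    have h1 : S.indicator (fun p => ‖fderiv ℝ u p‖ ^ 2) p ≤ 2 * (η s * E) := by
      by_cases hpS : p ∈ S
      · have hη1 : η s = 1 := by
          have hpS' : -R ≤ s ∧ s ≤ -(2 * δ) := hpS
          simp only [hη]
          rw [hTdef, Real.smoothTransition.one_of_one_le (hone s hpS'.2),
            Real.smoothTransition.one_of_one_le (by linarith)]
          ring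
        rw [indicator_of_mem hpS, hη1]
        linarith
      · rw [indicator_of_notMem hpS]
        positivity
    have h2 : w * G ≤ (c / 2 + ε) * w := by
      by_cases h : s ≤ -(2 * δ)
      · have : w = 0 := by
          rw [hwdef, hTdef, deriv_smoothTransition_of_one_le (hone s h), zero_div]
        simp [this]
      · rw [mul_comm]
        exact mul_le_mul_of_nonneg_right (hflux p hp (by linarith)) hw0
    have h3 : -(deriv T (s + R + 1) * G) ≤ K * (1 + C + c) *
        A.indicator (fun p => u p ^ 2 + ‖fderiv ℝ u p‖ ^ 2) p := by
      by_cases hpA : p ∈ A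
      · rw [indicator_of_mem hpA]
        have ht0 : 0 ≤ deriv T (s + R + 1) := deriv_smoothTransition_nonneg _
        calc -(deriv T (s + R + 1) * G) = deriv T (s + R + 1) * (-G) := by ring
          _ ≤ deriv T (s + R + 1) * |G| := by gcongr; exact neg_le_abs G
          _ ≤ K * ((1 + C + c) * e) := by
              gcongr
              exact hT _
          _ = _ := by ring
      · have hpA' : ¬ s < -R := hpA
        rw [indicator_of_notMem hpA, hTdef, deriv_smoothTransition_of_one_le (by linarith)]
        simp
    rw [hηd]
    change _ ≤ 2 * (η s * E + (deriv T (s + R + 1) - w) * G) + (c + 2 * ε) * w + _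
    linarith
  have hi1 := hint.const_mul 2
  have hi2 := hwint.const_mul (c + 2 * ε)
  have hi3 := (he.indicator hmA).const_mul (2 * (K * (1 + C + c)))
  have hmono := setIntegral_mono_on (hN.indicator hmS) ((hi1.add hi2).add hi3) hmC hptw
  rw [setIntegral_indicator hmS] at hmono
  refine hmono.trans (le_of_eq ?_)
  have e1 := integral_add (hi1.add hi2) hi3
  have e2 := integral_add hi1 hi2
  simp only [Pi.add_apply] at e1 e2
  simp only [Pi.add_apply]
  rw [e1, e2, integral_const_mul, integral_const_mul, integral_const_mul, hzero, hw,
    setIntegral_indicator hmA]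
  ring

/-- **Energy estimate:** if `c > 0`, `ψ ∈ W^{2,∞}(𝕋)` and `u` is a classical solution of
the temperature problem for `(c,ψ)`, then `∫_{Ω_ψ} |∇u|² dx dy ≤ c` (one period in `y`). -/
theorem dirichlet_energy_le_speed
    (c : ℝ) (ψ : ℝ → ℝ) (u : ℝ × ℝ → ℝ)
    (hc : 0 < c) (hψ : W2infPer ψ) (hu : IsTempSol c ψ u) :
    (∫ p in Omega ψ ∩ {p : ℝ × ℝ | p.2 ∈ Ico (0 : ℝ) 1}, ‖fderiv ℝ u p‖ ^ 2) ≤ c := by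
  change (∫ p in Cell ψ, ‖fderiv ℝ u p‖ ^ 2) ≤ c
  have hψ1 := hψ.contDiff
  have hmC := measurableSet_Cell hψ1.continuous
  have hms := measurable_signedDist hψ1.continuous
  obtain ⟨K, hK, hT⟩ := exists_deriv_smoothTransition_le
  obtain ⟨C, hC⟩ := isCompact_Icc.exists_bound_of_continuousOn
    (s := Icc (0 : ℝ) 1) hψ1.continuous_deriv_one.continuousOn
  have hN := integrableOn_norm_sq hu
  have he : IntegrableOn (fun p => u p ^ 2 + ‖fderiv ℝ u p‖ ^ 2) (Cell ψ) := hu.energy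
  -- The truncation with `R = n + 1` and `2 δ = 1 / (n + 1)`.
  set S : ℕ → Set (ℝ × ℝ) := fun n =>
    {p | -((n : ℝ) + 1) ≤ p.1 - ψ p.2 ∧ p.1 - ψ p.2 ≤ -(2 * (1 / (2 * ((n : ℝ) + 1))))} with hS
  set A : ℕ → Set (ℝ × ℝ) := fun n => {p | p.1 - ψ p.2 < -((n : ℝ) + 1)} with hA
  have hδeq : ∀ n : ℕ, 2 * (1 / (2 * ((n : ℝ) + 1))) = 1 / ((n : ℝ) + 1) := by
    intro n
    field_simp
  have hmS : ∀ n, MeasurableSet (S n) := fun n => hms measurableSet_Icc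
  have hmA : ∀ n, MeasurableSet (A n) := fun n => hms measurableSet_Iio
  have hSmono : Monotone fun n => Cell ψ ∩ S n := by
    intro m n hmn p hp
    have hmn' : (m : ℝ) ≤ n := by exact_mod_cast hmn
    refine ⟨hp.1, by linarith [hp.2.1], hp.2.2.trans ?_⟩
    rw [hδeq, hδeq]
    exact neg_le_neg (one_div_le_one_div_of_le (by positivity) (by linarith))
  have hSU : ⋃ n, Cell ψ ∩ S n = Cell ψ := by
    refine subset_antisymm (iUnion_subset fun n => inter_subset_left) fun p hp => ?_
    have hlt : p.1 < ψ p.2 := hp.1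
    obtain ⟨m, hm⟩ := exists_nat_gt (-(p.1 - ψ p.2))
    obtain ⟨k, hk⟩ := exists_nat_one_div_lt (show 0 < -(p.1 - ψ p.2) by linarith)
    have hm' : (m : ℝ) ≤ (max m k : ℕ) := by exact_mod_cast le_max_left m k
    have hk' : (k : ℝ) ≤ (max m k : ℕ) := by exact_mod_cast le_max_right m k
    refine mem_iUnion.2 ⟨max m k, hp, by linarith, ?_⟩
    rw [hδeq]
    have := one_div_le_one_div_of_le (show 0 < (k : ℝ) + 1 by positivity)
      (show (k : ℝ) + 1 ≤ (max m k : ℕ) + 1 by linarith)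
    linarith
  have hAanti : Antitone fun n => Cell ψ ∩ A n := by
    intro m n hmn p hp
    have hmn' : (m : ℝ) ≤ n := by exact_mod_cast hmn
    have h : p.1 - ψ p.2 < -((n : ℝ) + 1) := hp.2
    exact ⟨hp.1, show p.1 - ψ p.2 < -((m : ℝ) + 1) by linarith⟩
  have hAI : ⋂ n, Cell ψ ∩ A n = ∅ := by
    refine eq_empty_of_forall_notMem fun p hp => ?_
    obtain ⟨m, hm⟩ := exists_nat_gt (-(p.1 - ψ p.2))
    have h : p.1 - ψ p.2 < -((m : ℝ) + 1) := (mem_iInter.1 hp m).2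
    linarith
  have hlimS := tendsto_setIntegral_of_monotone (fun n => hmC.inter (hmS n)) hSmono
    (hSU.symm ▸ hN)
  have hlimA := tendsto_setIntegral_of_antitone (fun n => hmC.inter (hmA n)) hAanti
    ⟨0, he.mono_set inter_subset_left⟩
  rw [hSU] at hlimS
  rw [hAI, setIntegral_empty] at hlimA
  have hmain : ∀ ε > 0, (∫ p in Cell ψ, ‖fderiv ℝ u p‖ ^ 2) ≤ c + 2 * ε := by
    intro ε hε
    obtain ⟨d, hd, hflux⟩ := flux_le_near_boundary hc hψ hu hε
    have hlim := (hlimA.const_mul (2 * (K * (1 + C + c)))).const_add (c + 2 * ε)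
    rw [mul_zero, add_zero] at hlim
    refine le_of_tendsto_of_tendsto hlimS hlim ?_
    obtain ⟨k, hk⟩ := exists_nat_one_div_lt hd
    filter_upwards [eventually_ge_atTop k] with n hn
    have hn' : (k : ℝ) ≤ n := by exact_mod_cast hn
    have hle := one_div_le_one_div_of_le (show 0 < (k : ℝ) + 1 by positivity)
      (show (k : ℝ) + 1 ≤ (n : ℝ) + 1 by linarith)
    have hn0 : (0 : ℝ) ≤ n := n.cast_nonneg
    refine truncated_bound hc hψ hu hflux hK hT hC (by positivity) ?_ ?_
    · rw [hδeq]
      linarith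
    · rw [hδeq]
      have := one_div_le_one_div_of_le one_pos (show 1 ≤ (n : ℝ) + 1 by linarith)
      linarith
  refine le_of_forall_pos_le_add fun ε hε => ?_
  have := hmain (ε / 2) (by positivity)
  linarith
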